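/- Assume the solution J of the averaged system exists on [0,U), and that the solution (I,Θ) of the perturbed system exists on [0,U/ε) with |L(t)|^μ < ρ^μ(εt)/ε for all μ ∈ M and t ∈ [0,U/ε), where L(t) := (1/ε)[I(t) − J(εt)]. Then for all μ ∈ M and t ∈ [0,U/ε): |L(t)|^μ ≤ α^μ(εt, ε|L(t)|) + ε² Σ_λ R^μ_λ(εt) ∫₀^t Σ_κ P^λ_κ(εt') γ^κ(εt', ε|L(t')|, |L(t')|) dt', where |L(t)| := (|L(t)|^ν)_{ν∈M}. -/

import Mathlib

open scoped Real
open MeasureTheory Matrix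

section SeminormIntegral

open Filter Topology Set

theorem Seminorm.le_integral_of_hasDerivAt {E : Type*} [NormedAddCommGroup E] [NormedSpace ℝ E]
    [FiniteDimensional ℝ E] (p : Seminorm ℝ E) {Z Z' : ℝ → E} {β : ℝ → ℝ} {T : ℝ}
    (hT : 0 ≤ T) (h0 : Z 0 = 0) (hZ : ∀ t ∈ Icc 0 T, HasDerivAt Z (Z' t) t)
    (hβ : ContinuousOn β (Icc 0 T)) (hle : ∀ t ∈ Icc 0 T, p (Z' t) ≤ β t) :
    p (Z T) ≤ ∫ t in (0 : ℝ)..T, β t := by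
  have hp : Continuous p := continuousOn_univ.1 (p.convexOn.continuousOn isOpen_univ)
  have hint : IntervalIntegrable β volume 0 T := by
    apply ContinuousOn.intervalIntegrable; rwa [uIcc_of_le hT]
  refine image_le_of_liminf_slope_right_le_deriv_boundary (f := fun t => p (Z t)) (a := 0) (b := T)
    (B := fun x => ∫ t in (0 : ℝ)..x, β t) (B' := β) ?_ ?_ ?_ ?_ ?_ (right_mem_Icc.2 hT)
  · exact hp.comp_continuousOn fun t ht => (hZ t ht).continuousAt.continuousWithinAt
  · simp [h0]
  · have := intervalIntegral.continuousOn_primitive_interval' hint left_mem_uIcc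
    rwa [uIcc_of_le hT] at this
  · intro x hx
    have hmem : Icc 0 T ∈ 𝓝[>] x :=
      Icc_mem_nhdsGT_of_mem hx
    refine intervalIntegral.integral_hasDerivWithinAt_right
      (hint.mono_set ?_) (t := Ioi x) ?_ ?_
    · rw [uIcc_of_le hT, uIcc_of_le hx.1]; exact Icc_subset_Icc_right hx.2.le
    · exact ⟨Icc 0 T, hmem, hβ.aestronglyMeasurable measurableSet_Icc⟩
    · exact (hβ x ⟨hx.1, hx.2.le⟩).mono_of_mem_nhdsWithin hmem
  · intro x hx r hr
    have hx' : x ∈ Icc 0 T := ⟨hx.1, hx.2.le⟩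
    have h1 : Tendsto (fun z => p (slope Z x z)) (𝓝[>] x) (𝓝 (p (Z' x))) :=
      (hp.tendsto _).comp ((hasDerivAt_iff_tendsto_slope.1 (hZ x hx')).mono_left
        (nhdsWithin_mono _ fun z hz => ne_of_gt hz))
    have h2 := h1.eventually_lt_const ((hle x hx').trans_lt hr)
    refine (h2.and self_mem_nhdsWithin).frequently.mono ?_
    rintro z ⟨hz, hxz⟩
    refine lt_of_le_of_lt ?_ hz
    have hpos : 0 < (z - x)⁻¹ := inv_pos.2 (sub_pos.2 hxz)
    rw [slope_def_module, slope_def_module, map_smul_eq_mul, Real.norm_of_nonneg hpos.le,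
      smul_eq_mul]
    have hadd := map_add_le_add p (Z z - Z x) (Z x)
    rw [sub_add_cancel] at hadd
    exact mul_le_mul_of_nonneg_left (by linarith) hpos.le

end SeminormIntegral

theorem HasDerivAt.matrix_mulVec {m n : Type*} [Fintype m] [Fintype n] {A : ℝ → Matrix m n ℝ}
    {A' : Matrix m n ℝ} {y : ℝ → n → ℝ} {y' : n → ℝ} {t : ℝ}
    (hA : ∀ i j, HasDerivAt (fun τ => A τ i j) (A' i j) t) (hy : HasDerivAt y y' t) :
    HasDerivAt (fun τ => A τ *ᵥ y τ) (A' *ᵥ y t + A t *ᵥ y') t := by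
  rw [hasDerivAt_pi] at hy ⊢
  intro i
  have := HasDerivAt.fun_sum (u := Finset.univ) fun j _ => (hA i j).mul (hy j)
  simpa [Matrix.mulVec, dotProduct, Finset.sum_add_distrib] using this

theorem ContinuousOn.of_matrix_entries {X m n : Type*} [TopologicalSpace X] {A : X → Matrix m n ℝ}
    {S : Set X} (hA : ∀ i j, ContinuousOn (fun x => A x i j) S) : ContinuousOn A S :=
  continuousOn_pi.2 fun i => continuousOn_pi.2 fun j => hA i j

section FundamentalMatrix

open Set Filter Topology

variable {n : Type*} [Fintype n] [DecidableEq n] {A R : ℝ → Matrix n n ℝ} {T : ℝ}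

theorem eq_zero_of_hasDerivAt_mulVec {y : ℝ → n → ℝ}
    (hA : ContinuousOn A (Icc 0 T)) (hy : ∀ t ∈ Icc 0 T, HasDerivAt y (A t *ᵥ y t) t)
    {t : ℝ} (ht : t ∈ Icc 0 T) (hyt : y t = 0) : y 0 = 0 := by
  let Φ : Matrix n n ℝ →ₗ[ℝ] ((n → ℝ) →L[ℝ] (n → ℝ)) :=
    LinearMap.toContinuousLinearMap.toLinearMap ∘ₗ Matrix.toLin'.toLinearMap
  have hΦ : Continuous Φ := LinearMap.continuous_of_finiteDimensional Φ
  obtain ⟨C, hC⟩ := isCompact_Icc.exists_bound_of_continuousOn (hΦ.comp_continuousOn hA)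
  have hsub : Icc 0 t ⊆ Icc 0 T := Icc_subset_Icc_right ht.2
  have key := ODE_solution_unique_of_mem_Icc_left (a := 0) (b := t) (f := y) (g := fun _ => 0)
    (v := fun τ x => A τ *ᵥ x) (s := fun _ => univ) (K := C.toNNReal) ?_
    (fun τ hτ => (hy τ (hsub hτ)).continuousAt.continuousWithinAt)
    (fun τ hτ => (hy τ (hsub (Ioc_subset_Icc_self hτ))).hasDerivWithinAt) (fun _ _ => mem_univ _)
    continuousOn_const (fun τ _ => by simpa using hasDerivWithinAt_const τ _ (0 : n → ℝ))
    (fun _ _ => mem_univ _) hyt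
  · exact key ⟨le_rfl, ht.1⟩
  · intro τ hτ
    refine ((Φ (A τ)).lipschitz.weaken ?_).lipschitzOnWith
    rw [← NNReal.coe_le_coe, coe_nnnorm]
    exact (hC τ (hsub (Ioc_subset_Icc_self hτ))).trans (Real.le_coe_toNNReal C)

theorem det_ne_zero_of_hasDerivAt_mul (hA : ContinuousOn A (Icc 0 T)) (hR0 : R 0 = 1)
    (hR : ∀ t ∈ Icc 0 T, ∀ i j, HasDerivAt (fun τ => R τ i j) ((A t * R t) i j) t)
    {t : ℝ} (ht : t ∈ Icc 0 T) : (R t).det ≠ 0 := by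
  intro hdet
  obtain ⟨x, hx, hRx⟩ := Matrix.exists_mulVec_eq_zero_iff.2 hdet
  refine hx ?_
  have := eq_zero_of_hasDerivAt_mulVec (y := fun τ => R τ *ᵥ x) hA (fun τ hτ => ?_) ht hRx
  · simpa [hR0] using this
  · simpa using HasDerivAt.matrix_mulVec (hR τ hτ) (hasDerivAt_const τ x)

theorem hasDerivAt_inv_mulVec {y : ℝ → n → ℝ} {b : n → ℝ} {t : ℝ} (hdet : (R t).det ≠ 0)
    (hR : ∀ i j, HasDerivAt (fun τ => R τ i j) ((A t * R t) i j) t)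
    (hy : HasDerivAt y (A t *ᵥ y t + b) t) :
    HasDerivAt (fun τ => (R τ)⁻¹ *ᵥ y τ) ((R t)⁻¹ *ᵥ b) t := by
  have hRc : ContinuousAt R t :=
    continuousAt_pi.2 fun i => continuousAt_pi.2 fun j => (hR i j).continuousAt
  have hinv : ContinuousAt (fun τ => (R τ)⁻¹) t :=
    ContinuousAt.comp (f := R) (continuousAt_matrix_inv (R t) (by
      simpa [Ring.inverse_eq_inv'] using continuousAt_inv₀ hdet)) hRc
  have hunit : ∀ᶠ τ in 𝓝 t, (R τ).det ≠ 0 :=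
    ((Continuous.matrix_det continuous_id).continuousAt.comp hRc).eventually_ne hdet
  set z := (R t)⁻¹ *ᵥ y t with hz
  have hRz : R t *ᵥ z = y t := by
    rw [hz, Matrix.mulVec_mulVec, Matrix.mul_nonsing_inv _ (isUnit_iff_ne_zero.2 hdet),
      Matrix.one_mulVec]
  have hW : HasDerivAt (fun τ => y τ - R τ *ᵥ z) b t := by
    have := hy.sub (HasDerivAt.matrix_mulVec hR (hasDerivAt_const t z))
    convert! this using 1
    rw [← Matrix.mulVec_mulVec, hRz]
    simp
  rw [hasDerivAt_iff_tendsto_slope] at hW ⊢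
  have hlim := (Continuous.matrix_mulVec (A := fun q : Matrix n n ℝ × (n → ℝ) => q.1)
    continuous_fst continuous_snd).tendsto ((R t)⁻¹, b) |>.comp
      ((hinv.tendsto.mono_left nhdsWithin_le_nhds).prodMk_nhds hW)
  refine hlim.congr' ?_
  filter_upwards [hunit.filter_mono nhdsWithin_le_nhds] with τ hτ
  simp only [Function.comp_apply, slope_def_module, hRz, sub_self, sub_zero, Matrix.mulVec_smul,
    Matrix.mulVec_sub]
  rw [Matrix.mulVec_mulVec, Matrix.nonsing_inv_mul _ (isUnit_iff_ne_zero.2 hτ), Matrix.one_mulVec]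

end FundamentalMatrix

section PartialDerivatives

open Set Filter Topology

variable {E F : Type*} [NormedAddCommGroup E] [NormedSpace ℝ E] [NormedAddCommGroup F]
  [NormedSpace ℝ F] {Λ : Set E}

/-- A partial derivative at a point and a continuous partial derivative in the remaining real
variable give joint differentiability. -/
theorem hasFDerivAt_uncurry_of_continuousOn {φ φθ : E → ℝ → F} {φI : E →L[ℝ] F} {x : E} {θ : ℝ}
    (hΛ : IsOpen Λ) (hx : x ∈ Λ) (hφI : HasFDerivAt (fun y => φ y θ) φI x)
    (hφθ : ∀ y ∈ Λ, ∀ η, HasDerivAt (φ y) (φθ y η) η)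
    (hcont : ContinuousOn (fun q : E × ℝ => φθ q.1 q.2) (Λ ×ˢ univ)) :
    HasFDerivAt (fun q : E × ℝ => φ q.1 q.2)
      (φI.coprod (ContinuousLinearMap.toSpanSingleton ℝ (φθ x θ))) (x, θ) := by
  have hnhds : ∀ᶠ q : E × ℝ in 𝓝 (x, θ), q.1 ∈ Λ :=
    continuous_fst.continuousAt.eventually (hΛ.mem_nhds hx)
  have h1 : (fun q : E × ℝ => φ q.1 θ - φ x θ - φI (q.1 - x)) =o[𝓝 (x, θ)]
      fun q => q - (x, θ) := by
    refine ((hasFDerivAt_iff_isLittleO.1 hφI).comp_tendsto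
      (continuous_fst.tendsto (x, θ))).trans_isBigO
      (Asymptotics.isBigO_of_le _ fun q => ?_)
    exact norm_fst_le (q - (x, θ))
  have h2 : (fun q : E × ℝ => φ q.1 q.2 - φ q.1 θ -
      ContinuousLinearMap.toSpanSingleton ℝ (φθ x θ) (q.2 - θ)) =o[𝓝 (x, θ)]
      fun q => q - (x, θ) := by
    refine Asymptotics.IsLittleO.trans_isBigO (g := fun q : E × ℝ => q.2 - θ) ?_
      (Asymptotics.isBigO_of_le _ fun q => norm_snd_le (q - (x, θ)))
    have hc : ContinuousAt (fun q : E × ℝ => φθ q.1 q.2) (x, θ) :=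
      hcont.continuousAt ((hΛ.prod isOpen_univ).mem_nhds ⟨hx, mem_univ _⟩)
    refine Asymptotics.isLittleO_iff.2 fun C hC => ?_
    obtain ⟨δ, hδ, hball⟩ := Metric.eventually_nhds_iff_ball.1
      (hnhds.and (hc.eventually (Metric.closedBall_mem_nhds _ hC)))
    filter_upwards [Metric.ball_mem_nhds _ hδ] with q hq
    rw [← ball_prod_same] at hball hq
    have hderiv : ∀ η ∈ Metric.ball θ δ, HasDerivWithinAt (fun η => φ q.1 η - η • φθ x θ)
        (φθ q.1 η - φθ x θ) (Metric.ball θ δ) η := fun η hη => by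
      have := (hφθ q.1 (hball (q.1, η) ⟨hq.1, hη⟩).1 η).sub
        ((hasDerivAt_id η).smul_const (φθ x θ))
      simpa using! this.hasDerivWithinAt
    have hmvt := (convex_ball θ δ).norm_image_sub_le_of_norm_hasDerivWithin_le hderiv
      (C := C) (fun η hη => mem_closedBall_iff_norm.1 (hball (q.1, η) ⟨hq.1, hη⟩).2)
      (Metric.mem_ball_self hδ) hq.2
    convert hmvt using 2
    simp only [ContinuousLinearMap.toSpanSingleton_apply, sub_smul]
    abel
  rw [hasFDerivAt_iff_isLittleO]
  refine (h1.add h2).congr_left fun q => ?_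
  simp only [ContinuousLinearMap.coprod_apply, Prod.fst_sub, Prod.snd_sub]
  abel

/-- Chain rule along a curve for a function of an action and an angle. -/
theorem hasDerivAt_comp_curve {φ φθ : E → ℝ → F} {φI : E →L[ℝ] F} {x : ℝ → E} {θ : ℝ → ℝ}
    {x' : E} {θ' t : ℝ} (hΛ : IsOpen Λ) (hx : x t ∈ Λ)
    (hφI : HasFDerivAt (fun y => φ y (θ t)) φI (x t))
    (hφθ : ∀ y ∈ Λ, ∀ η, HasDerivAt (φ y) (φθ y η) η)
    (hcont : ContinuousOn (fun q : E × ℝ => φθ q.1 q.2) (Λ ×ˢ univ))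
    (hx' : HasDerivAt x x' t) (hθ' : HasDerivAt θ θ' t) :
    HasDerivAt (fun τ => φ (x τ) (θ τ)) (φI x' + θ' • φθ (x t) (θ t)) t := by
  have := (hasFDerivAt_uncurry_of_continuousOn hΛ hx hφI hφθ hcont).comp_hasDerivAt t
    (hx'.prodMk hθ')
  simpa [Function.comp_def] using this

theorem continuousOn_uncurry_of_hasFDerivAt {φ φθ : E → ℝ → F} {φI : E → ℝ → E →L[ℝ] F}
    (hΛ : IsOpen Λ) (hφI : ∀ x ∈ Λ, ∀ θ, HasFDerivAt (fun y => φ y θ) (φI x θ) x)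
    (hφθ : ∀ y ∈ Λ, ∀ η, HasDerivAt (φ y) (φθ y η) η)
    (hcont : ContinuousOn (fun q : E × ℝ => φθ q.1 q.2) (Λ ×ˢ univ)) :
    ContinuousOn (fun q : E × ℝ => φ q.1 q.2) (Λ ×ˢ univ) := fun q hq =>
  (hasFDerivAt_uncurry_of_continuousOn hΛ hq.1 (hφI q.1 hq.1 q.2) hφθ
    hcont).continuousAt.continuousWithinAt

omit [NormedSpace ℝ E] [NormedSpace ℝ F] in
theorem continuous_slice {h : E → ℝ → F} {x : E}
    (hh : ContinuousOn (fun q : E × ℝ => h q.1 q.2) (Λ ×ˢ univ)) (hx : x ∈ Λ) :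
    Continuous (h x) :=
  hh.comp_continuous (f := fun η : ℝ => (x, η)) (by fun_prop) fun _ => ⟨hx, mem_univ _⟩

omit [NormedSpace ℝ E] in
theorem continuousOn_intervalIntegral {h : E → ℝ → F} (a : ℝ)
    (hh : ContinuousOn (fun q : E × ℝ => h q.1 q.2) (Λ ×ˢ univ)) :
    ContinuousOn (fun q : E × ℝ => ∫ η in a..q.2, h q.1 η) (Λ ×ˢ univ) := by
  have hc : Continuous (Function.uncurry fun (x : Λ) η => h x η) :=
    hh.comp_continuous (f := fun q : Λ × ℝ => ((q.1 : E), q.2)) (by fun_prop)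
      fun q => ⟨q.1.2, mem_univ _⟩
  have hp := intervalIntegral.continuous_parametric_primitive_of_continuous (μ := volume)
    (a₀ := a) hc
  rw [continuousOn_iff_continuous_domRestrict]
  exact hp.comp (g := fun p : Λ × ℝ => ∫ η in a..p.2, h p.1 η)
    (f := fun q : ↥(Λ ×ˢ (univ : Set ℝ)) => ((⟨q.1.1, q.2.1⟩ : Λ), q.1.2)) (by fun_prop)

omit [NormedSpace ℝ E] in
theorem continuousOn_intervalIntegral_const {h : E → ℝ → F} (a b : ℝ)
    (hh : ContinuousOn (fun q : E × ℝ => h q.1 q.2) (Λ ×ˢ univ)) :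
    ContinuousOn (fun x => ∫ η in a..b, h x η) Λ :=
  (continuousOn_intervalIntegral a hh).comp (f := fun x : E => (x, b)) (by fun_prop)
    fun _ hx => ⟨hx, mem_univ _⟩

theorem hasFDerivAt_intervalIntegral_of_continuousOn [FiniteDimensional ℝ E]
    {h : E → ℝ → F} {h' : E → ℝ → E →L[ℝ] F} (hΛ : IsOpen Λ)
    (hh : ContinuousOn (fun q : E × ℝ => h q.1 q.2) (Λ ×ˢ univ))
    (hh' : ContinuousOn (fun q : E × ℝ => h' q.1 q.2) (Λ ×ˢ univ))
    (hd : ∀ x ∈ Λ, ∀ η, HasFDerivAt (fun y => h y η) (h' x η) x) (a b : ℝ) {x : E} (hx : x ∈ Λ) :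
    HasFDerivAt (fun y => ∫ η in a..b, h y η) (∫ η in a..b, h' x η) x := by
  obtain ⟨δ, hδ, hball⟩ := Metric.nhds_basis_closedBall.mem_iff.1 (hΛ.mem_nhds hx)
  have hcomp : IsCompact (Metric.closedBall x δ ×ˢ uIcc a b) :=
    (isCompact_closedBall x δ).prod isCompact_uIcc
  obtain ⟨C, hC⟩ := hcomp.exists_bound_of_continuousOn
    (hh'.mono (prod_mono hball (subset_univ _)))
  refine intervalIntegral.hasFDerivAt_integral_of_dominated_of_fderiv_le
    (bound := fun _ => C) (F' := h') (Metric.closedBall_mem_nhds x hδ) ?_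
    ((continuous_slice hh hx).intervalIntegrable _ _) (continuous_slice hh' hx).aestronglyMeasurable ?_
    intervalIntegrable_const ?_
  · filter_upwards [hΛ.mem_nhds hx] with y hy using (continuous_slice hh hy).aestronglyMeasurable
  · exact .of_forall fun η hη y hy => hC (y, η) ⟨hy, uIoc_subset_uIcc hη⟩
  · exact .of_forall fun η _ y hy => hd y (hball hy) η

/-- A function with zero mean over a period, whose angular derivative is `C¹`, has a jointly
continuous derivative in the remaining variable. -/
theorem continuousOn_fderiv_of_integral_eq_zero [FiniteDimensional ℝ E] [CompleteSpace F]
    {s sθ : E → ℝ → F} {sI : E → ℝ → E →L[ℝ] F} {T : ℝ} (hT : 0 < T) (hΛ : IsOpen Λ)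
    (hsθ : ∀ x ∈ Λ, ∀ θ, HasDerivAt (s x) (sθ x θ) θ)
    (hC : ContDiffOn ℝ 1 (fun q : E × ℝ => sθ q.1 q.2) (Λ ×ˢ univ))
    (havg : ∀ x ∈ Λ, ∫ θ in (0 : ℝ)..T, s x θ = 0)
    (hsI : ∀ x ∈ Λ, ∀ θ, HasFDerivAt (fun y => s y θ) (sI x θ) x) :
    ContinuousOn (fun q : E × ℝ => sI q.1 q.2) (Λ ×ˢ univ) := by
  have hopen : IsOpen (Λ ×ˢ (univ : Set ℝ)) := hΛ.prod isOpen_univ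
  set A : E → ℝ → E →L[ℝ] F := fun x θ =>
    (fderiv ℝ (fun q : E × ℝ => sθ q.1 q.2) (x, θ)).comp (ContinuousLinearMap.inl ℝ E ℝ) with hA
  have hAc : ContinuousOn (fun q : E × ℝ => A q.1 q.2) (Λ ×ˢ univ) :=
    (hC.continuousOn_fderiv_of_isOpen hopen le_rfl).clm_comp continuousOn_const
  have hAd : ∀ x ∈ Λ, ∀ η, HasFDerivAt (fun y => sθ y η) (A x η) x := fun x hx η => by
    have hd := ((hC.differentiableOn one_ne_zero).differentiableAt
      (hopen.mem_nhds (x := (x, η)) ⟨hx, mem_univ _⟩)).hasFDerivAt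
    exact hd.comp (f := fun y : E => (y, η)) x (hasFDerivAt_prodMk_left x η)
  have hsθc : ∀ x ∈ Λ, Continuous (sθ x) := fun x hx => continuous_slice hC.continuousOn hx
  have hkc : ContinuousOn (fun q : E × ℝ => (q.2 - T) • sθ q.1 q.2) (Λ ×ˢ univ) :=
    (by fun_prop : Continuous fun q : E × ℝ => q.2 - T).continuousOn.smul hC.continuousOn
  have hkAc : ContinuousOn (fun q : E × ℝ => (q.2 - T) • A q.1 q.2) (Λ ×ˢ univ) :=
    (by fun_prop : Continuous fun q : E × ℝ => q.2 - T).continuousOn.smul hAc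
  have hs0 : ∀ x ∈ Λ, s x 0 = T⁻¹ • ∫ η in (0 : ℝ)..T, (η - T) • sθ x η := fun x hx => by
    have hparts := intervalIntegral.integral_smul_deriv_eq_deriv_smul (a := 0) (b := T)
      (u := fun η => η - T) (v := s x) (u' := fun _ => 1) (v' := sθ x)
      (fun η _ => (hasDerivAt_id η).sub_const T) (fun η _ => hsθ x hx η)
      intervalIntegrable_const ((hsθc x hx).intervalIntegrable _ _)
    simp only [sub_self, zero_smul, zero_sub, one_smul, havg x hx, sub_zero] at hparts
    rw [hparts, neg_smul, neg_neg, inv_smul_smul₀ hT.ne']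
  have hformula : ∀ x ∈ Λ, ∀ θ, s x θ = (∫ η in (0 : ℝ)..θ, sθ x η) +
      T⁻¹ • ∫ η in (0 : ℝ)..T, (η - T) • sθ x η := fun x hx θ => by
    rw [intervalIntegral.integral_eq_sub_of_hasDerivAt (fun η _ => hsθ x hx η)
      ((hsθc x hx).intervalIntegrable _ _), ← hs0 x hx, sub_add_cancel]
  have hsIeq : ∀ q ∈ Λ ×ˢ (univ : Set ℝ), sI q.1 q.2 = (∫ η in (0 : ℝ)..q.2, A q.1 η) +
      T⁻¹ • ∫ η in (0 : ℝ)..T, (η - T) • A q.1 η := by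
    rintro ⟨x, θ⟩ ⟨hx, -⟩
    have h1 := hasFDerivAt_intervalIntegral_of_continuousOn hΛ hC.continuousOn hAc hAd 0 θ hx
    have h2 := hasFDerivAt_intervalIntegral_of_continuousOn hΛ hkc hkAc
      (fun y hy η => (hAd y hy η).const_smul (η - T)) 0 T hx
    refine (hsI x hx θ).unique ((h1.add (h2.const_smul T⁻¹)).congr_of_eventuallyEq ?_)
    filter_upwards [hΛ.mem_nhds hx] with y hy using hformula y hy θ
  have h1 := continuousOn_intervalIntegral 0 hAc
  have h2 : ContinuousOn (fun q : E × ℝ => ∫ η in (0 : ℝ)..T, (η - T) • A q.1 η) (Λ ×ˢ univ) :=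
    ContinuousOn.comp (g := fun x => ∫ η in (0 : ℝ)..T, (η - T) • A x η) (f := Prod.fst)
      (continuousOn_intervalIntegral_const (h := fun x η => (η - T) • A x η) 0 T hkAc)
      continuousOn_fst fun q hq => hq.1
  have h3 := h1.add (h2.const_smul T⁻¹)
  exact h3.congr hsIeq

end PartialDerivatives

theorem contDiffOn_one_of_hasFDerivAt {E F : Type*} [NormedAddCommGroup E] [NormedSpace ℝ E]
    [NormedAddCommGroup F] [NormedSpace ℝ F] {Λ : Set E} (hΛ : IsOpen Λ) {φ : E → F}
    {φ' : E → E →L[ℝ] F} (hφ : ∀ x ∈ Λ, HasFDerivAt φ (φ' x) x) (hφ' : ContinuousOn φ' Λ) :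
    ContDiffOn ℝ 1 φ Λ := by
  rw [show (1 : WithTop ℕ∞) = 0 + 1 by norm_num, contDiffOn_succ_iff_fderiv_of_isOpen hΛ]
  refine ⟨fun x hx => (hφ x hx).differentiableAt.differentiableWithinAt, by simp, ?_⟩
  rw [contDiffOn_zero]
  exact hφ'.congr fun x hx => (hφ x hx).fderiv

/-- **Seminorm integral inequalities for the averaging error**
(Lemma 2D of Morosi–Pizzocchero).  Under the full one-frequency averaging
framework (perturbed and averaged systems, auxiliary functions, a separating
family of seminorms `N` with consistent families `NT`, `NT2` on tensors, and
the estimator functions `a, b, c, dd, ee, Rb, Pb` on `Γ_ρ`), if the perturbed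
solution exists on `[0,U/ε)` and `|L(t)|^μ < ρ^μ(εt)/ε` there, then the
seminorms of the error satisfy the stated system of integral inequalities. -/
theorem averaging_error_seminorm_integral_inequality
    {d : ℕ} (hd : 1 ≤ d)
    (Λ : Set (Fin d → ℝ)) (hΛ : IsOpen Λ)
    (m : ℕ) (hm : 2 ≤ m)
    (f : (Fin d → ℝ) → ℝ → Fin d → ℝ)
    (g : (Fin d → ℝ) → ℝ → ℝ)
    (ω : (Fin d → ℝ) → ℝ)
    (hf : ContDiffOn ℝ m (fun p : (Fin d → ℝ) × ℝ => f p.1 p.2) (Λ ×ˢ Set.univ))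
    (hfper : ∀ I θ, f I (θ + 2 * π) = f I θ)
    (hg : ContDiffOn ℝ m (fun p : (Fin d → ℝ) × ℝ => g p.1 p.2) (Λ ×ˢ Set.univ))
    (hgper : ∀ I θ, g I (θ + 2 * π) = g I θ)
    (hω : ContDiffOn ℝ m ω Λ)
    (hωne : ∀ I ∈ Λ, ω I ≠ 0)
    (I₀ : Fin d → ℝ) (hI₀ : I₀ ∈ Λ) (θ₀ : ℝ)
    (ε : ℝ) (hε : 0 < ε)
    -- the averaged vector field
    (fbar : (Fin d → ℝ) → Fin d → ℝ)
    (hfbar : ∀ I, fbar I = (2 * π)⁻¹ • ∫ θ in (0:ℝ)..2 * π, f I θ)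
    -- the averaged solution on [0,U)
    (U : EReal) (hU : 0 < U)
    (J : ℝ → Fin d → ℝ)
    (hJ0 : J 0 = I₀)
    (hJmem : ∀ τ : ℝ, 0 ≤ τ → (τ : EReal) < U → J τ ∈ Λ)
    (hJode : ∀ τ : ℝ, 0 ≤ τ → (τ : EReal) < U → HasDerivAt J (fbar (J τ)) τ)
    -- the Jacobian ∂f̄/∂I
    (F' : (Fin d → ℝ) → Matrix (Fin d) (Fin d) ℝ)
    (hF' : ∀ I ∈ Λ, HasFDerivAt fbar (Matrix.mulVecLin (F' I)).toContinuousLinearMap I)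
    -- the auxiliary function s :  f = f̄ + ω ∂s/∂θ,  s̄ = 0
    (s sθ : (Fin d → ℝ) → ℝ → Fin d → ℝ)
    (hsθ : ∀ I ∈ Λ, ∀ θ : ℝ, HasDerivAt (fun θ' => s I θ') (sθ I θ) θ)
    (hs : ∀ I ∈ Λ, ∀ θ : ℝ, f I θ = fbar I + ω I • sθ I θ)
    (hsavg : ∀ I ∈ Λ, (∫ θ in (0:ℝ)..2 * π, s I θ) = 0)
    (sI : (Fin d → ℝ) → ℝ → Matrix (Fin d) (Fin d) ℝ)
    (hsI : ∀ I ∈ Λ, ∀ θ : ℝ,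
      HasFDerivAt (fun I' => s I' θ) (Matrix.mulVecLin (sI I θ)).toContinuousLinearMap I)
    -- p := (∂s/∂I) f + (∂s/∂θ) g  and its average p̄
    (p : (Fin d → ℝ) → ℝ → Fin d → ℝ)
    (hp : ∀ I ∈ Λ, ∀ θ : ℝ, p I θ = sI I θ *ᵥ f I θ + g I θ • sθ I θ)
    (pbar : (Fin d → ℝ) → Fin d → ℝ)
    (hpbar : ∀ I ∈ Λ, pbar I = (2 * π)⁻¹ • ∫ θ in (0:ℝ)..2 * π, p I θ)
    -- R and K : solutions of the linear auxiliary systems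
    (R : ℝ → Matrix (Fin d) (Fin d) ℝ)
    (hR0 : R 0 = 1)
    (hRode : ∀ τ : ℝ, 0 ≤ τ → (τ : EReal) < U → ∀ i j,
      HasDerivAt (fun τ' => R τ' i j) ((F' (J τ) * R τ) i j) τ)
    (K : ℝ → Fin d → ℝ)
    (hK0 : K 0 = 0)
    (hKode : ∀ τ : ℝ, 0 ≤ τ → (τ : EReal) < U →
      HasDerivAt K (F' (J τ) *ᵥ K τ + pbar (J τ)) τ)
    -- v :  s = ω ∂v/∂θ,  v(I,θ₀) = 0
    (v vθ : (Fin d → ℝ) → ℝ → Fin d → ℝ)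
    (hvθ : ∀ I ∈ Λ, ∀ θ : ℝ, HasDerivAt (fun θ' => v I θ') (vθ I θ) θ)
    (hv : ∀ I ∈ Λ, ∀ θ : ℝ, s I θ = ω I • vθ I θ)
    (hv0 : ∀ I ∈ Λ, v I θ₀ = 0)
    (vI : (Fin d → ℝ) → ℝ → Matrix (Fin d) (Fin d) ℝ)
    (hvI : ∀ I ∈ Λ, ∀ θ : ℝ,
      HasFDerivAt (fun I' => v I' θ) (Matrix.mulVecLin (vI I θ)).toContinuousLinearMap I)
    -- q := (∂v/∂I) f + (∂v/∂θ) g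
    (q : (Fin d → ℝ) → ℝ → Fin d → ℝ)
    (hq : ∀ I ∈ Λ, ∀ θ : ℝ, q I θ = vI I θ *ᵥ f I θ + g I θ • vθ I θ)
    -- w :  p = p̄ + ω ∂w/∂θ,  w(I,θ₀) = 0
    (w wθ : (Fin d → ℝ) → ℝ → Fin d → ℝ)
    (hwθ : ∀ I ∈ Λ, ∀ θ : ℝ, HasDerivAt (fun θ' => w I θ') (wθ I θ) θ)
    (hw : ∀ I ∈ Λ, ∀ θ : ℝ, p I θ = pbar I + ω I • wθ I θ)
    (hw0 : ∀ I ∈ Λ, w I θ₀ = 0)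
    (wI : (Fin d → ℝ) → ℝ → Matrix (Fin d) (Fin d) ℝ)
    (hwI : ∀ I ∈ Λ, ∀ θ : ℝ,
      HasFDerivAt (fun I' => w I' θ) (Matrix.mulVecLin (wI I θ)).toContinuousLinearMap I)
    -- u := (∂w/∂I) f + (∂w/∂θ) g
    (u : (Fin d → ℝ) → ℝ → Fin d → ℝ)
    (hu : ∀ I ∈ Λ, ∀ θ : ℝ, u I θ = wI I θ *ᵥ f I θ + g I θ • wθ I θ)
    -- the second derivative ∂²f̄/∂I² and 𝓜 := (∂²f̄/∂I²) f̄ − (∂f̄/∂I)²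
    (F'' : (Fin d → ℝ) → Fin d → Fin d → Fin d → ℝ)
    (hF'' : ∀ I ∈ Λ, ∀ i k, HasFDerivAt (fun I' => F' I' i k)
      (∑ j, F'' I i j k • (ContinuousLinearMap.proj j : (Fin d → ℝ) →L[ℝ] ℝ)) I)
    (𝓜 : (Fin d → ℝ) → Matrix (Fin d) (Fin d) ℝ)
    (h𝓜 : ∀ I ∈ Λ, ∀ i k, 𝓜 I i k = (∑ j, F'' I i j k * fbar I j) - (F' I * F' I) i k)
    -- 𝓖 and 𝓗 on Λ†
    (𝓖 : (Fin d → ℝ) → (Fin d → ℝ) → Matrix (Fin d) (Fin d) ℝ)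
    (h𝓖 : ∀ I δI : Fin d → ℝ, segment ℝ I (I + δI) ⊆ Λ →
      pbar (I + δI) = pbar I + 𝓖 I δI *ᵥ δI)
    (𝓗 : (Fin d → ℝ) → (Fin d → ℝ) → Fin d → Fin d → Fin d → ℝ)
    (h𝓗 : ∀ I δI : Fin d → ℝ, segment ℝ I (I + δI) ⊆ Λ →
      fbar (I + δI) = fbar I + F' I *ᵥ δI +
        (1/2 : ℝ) • (fun i => ∑ j, ∑ k, 𝓗 I δI i j k * δI j * δI k))
    (h𝓗symm : ∀ I δI : Fin d → ℝ, segment ℝ I (I + δI) ⊆ Λ →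
      ∀ i j k, 𝓗 I δI i j k = 𝓗 I δI i k j)
    -- a separating family of seminorms on ℝ^d …
    {M : Type*} [Fintype M] [Nonempty M]
    (N : M → Seminorm ℝ (Fin d → ℝ))
    (hNsep : ∀ X : Fin d → ℝ, (∀ μ, N μ X = 0) → X = 0)
    -- … with consistent families on T¹₁(ℝ^d) and T¹₂(ℝ^d)
    (NT : M → M → Seminorm ℝ (Matrix (Fin d) (Fin d) ℝ))
    (hNT : ∀ (A : Matrix (Fin d) (Fin d) ℝ) (X : Fin d → ℝ) (μ : M),
      N μ (A *ᵥ X) ≤ ∑ ν, NT μ ν A * N ν X)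
    (NT2 : M → M → M → Seminorm ℝ (Fin d → Fin d → Fin d → ℝ))
    (hNT2 : ∀ (C : Fin d → Fin d → Fin d → ℝ) (X Y : Fin d → ℝ) (μ : M),
      N μ (fun i => ∑ j, ∑ k, C i j k * X j * Y k) ≤
        ∑ ν, ∑ κ, NT2 μ ν κ C * N ν X * N κ Y)
    -- ρ : [0,U) → [0,+∞]^M with B(J(τ),ρ(τ)) ⊆ Λ ; the set Γ_ρ
    (ρ : ℝ → M → EReal)
    (hρnonneg : ∀ τ : ℝ, 0 ≤ τ → (τ : EReal) < U → ∀ μ, 0 ≤ ρ τ μ)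
    (hρcont : ∀ μ, ContinuousOn (fun τ => ρ τ μ) {τ : ℝ | 0 ≤ τ ∧ (τ : EReal) < U})
    (hρB : ∀ τ : ℝ, 0 ≤ τ → (τ : EReal) < U → ∀ I : Fin d → ℝ,
      (∀ μ, ((N μ (I - J τ) : ℝ) : EReal) < ρ τ μ) → I ∈ Λ)
    (Γ : Set (ℝ × (M → ℝ)))
    (hΓ : Γ = {pr : ℝ × (M → ℝ) | 0 ≤ pr.1 ∧ ((pr.1 : ℝ) : EReal) < U ∧
      ∀ μ, 0 ≤ pr.2 μ ∧ ((pr.2 μ : ℝ) : EReal) < ρ pr.1 μ})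
    -- the estimators a, b, c, d, e on Γ_ρ
    (a b c : ℝ → (M → ℝ) → M → ℝ)
    (dd : ℝ → (M → ℝ) → M → M → ℝ)
    (ee : ℝ → (M → ℝ) → M → M → M → ℝ)
    (hacont : ∀ μ, ContinuousOn (fun pr : ℝ × (M → ℝ) => a pr.1 pr.2 μ) Γ)
    (hbcont : ∀ μ, ContinuousOn (fun pr : ℝ × (M → ℝ) => b pr.1 pr.2 μ) Γ)
    (hccont : ∀ μ, ContinuousOn (fun pr : ℝ × (M → ℝ) => c pr.1 pr.2 μ) Γ)
    (hdcont : ∀ μ ν, ContinuousOn (fun pr : ℝ × (M → ℝ) => dd pr.1 pr.2 μ ν) Γ)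
    (hecont : ∀ μ ν κ, ContinuousOn (fun pr : ℝ × (M → ℝ) => ee pr.1 pr.2 μ ν κ) Γ)
    (hanonneg : ∀ τ r, (τ, r) ∈ Γ → ∀ μ, 0 ≤ a τ r μ)
    (hbnonneg : ∀ τ r, (τ, r) ∈ Γ → ∀ μ, 0 ≤ b τ r μ)
    (hcnonneg : ∀ τ r, (τ, r) ∈ Γ → ∀ μ, 0 ≤ c τ r μ)
    (hdnonneg : ∀ τ r, (τ, r) ∈ Γ → ∀ μ ν, 0 ≤ dd τ r μ ν)
    (henonneg : ∀ τ r, (τ, r) ∈ Γ → ∀ μ ν κ, 0 ≤ ee τ r μ ν κ)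
    (ha : ∀ τ : ℝ, 0 ≤ τ → (τ : EReal) < U → ∀ δJ : Fin d → ℝ,
      (∀ μ, ((N μ δJ : ℝ) : EReal) < ρ τ μ) → ∀ (θ : ℝ) (μ : M),
      N μ (s (J τ + δJ) θ - R τ *ᵥ s I₀ θ₀ - K τ) ≤ a τ (fun lam => N lam δJ) μ)
    (hb : ∀ τ : ℝ, 0 ≤ τ → (τ : EReal) < U → ∀ δJ : Fin d → ℝ,
      (∀ μ, ((N μ δJ : ℝ) : EReal) < ρ τ μ) → ∀ (θ : ℝ) (μ : M),
      N μ (w (J τ + δJ) θ - F' (J τ) *ᵥ v (J τ + δJ) θ) ≤ b τ (fun lam => N lam δJ) μ)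
    (hc : ∀ τ : ℝ, 0 ≤ τ → (τ : EReal) < U → ∀ δJ : Fin d → ℝ,
      (∀ μ, ((N μ δJ : ℝ) : EReal) < ρ τ μ) → ∀ (θ : ℝ) (μ : M),
      N μ (u (J τ + δJ) θ - F' (J τ) *ᵥ (w (J τ + δJ) θ + q (J τ + δJ) θ)
          - 𝓜 (J τ) *ᵥ v (J τ + δJ) θ) ≤ c τ (fun lam => N lam δJ) μ)
    (hdbound : ∀ τ : ℝ, 0 ≤ τ → (τ : EReal) < U → ∀ δJ : Fin d → ℝ,
      (∀ μ, ((N μ δJ : ℝ) : EReal) < ρ τ μ) → ∀ μ ν,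
      NT μ ν (𝓖 (J τ) δJ) ≤ dd τ (fun lam => N lam δJ) μ ν)
    (hebound : ∀ τ : ℝ, 0 ≤ τ → (τ : EReal) < U → ∀ δJ : Fin d → ℝ,
      (∀ μ, ((N μ δJ : ℝ) : EReal) < ρ τ μ) → ∀ μ ν κ,
      NT2 μ ν κ (𝓗 (J τ) δJ) ≤ ee τ (fun lam => N lam δJ) μ ν κ)
    -- monotonicity of c, d, e in r
    (hcmono : ∀ τ r r', (τ, r) ∈ Γ → (τ, r') ∈ Γ → (∀ lam, r lam ≤ r' lam) →
      ∀ μ, c τ r μ ≤ c τ r' μ)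
    (hdmono : ∀ τ r r', (τ, r) ∈ Γ → (τ, r') ∈ Γ → (∀ lam, r lam ≤ r' lam) →
      ∀ μ ν, dd τ r μ ν ≤ dd τ r' μ ν)
    (hemono : ∀ τ r r', (τ, r) ∈ Γ → (τ, r') ∈ Γ → (∀ lam, r lam ≤ r' lam) →
      ∀ μ ν κ, ee τ r μ ν κ ≤ ee τ r' μ ν κ)
    -- the combined estimators α and γ
    (α : ℝ → (M → ℝ) → M → ℝ)
    (hα : ∀ τ r μ, α τ r μ = a τ r μ + ε * b τ r μ)
    (γ : ℝ → (M → ℝ) → (M → ℝ) → M → ℝ)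
    (hγ : ∀ τ r ℓ μ, γ τ r ℓ μ = c τ r μ + (∑ ν, dd τ r μ ν * ℓ ν)
      + (1/2 : ℝ) * ∑ ν, ∑ κ, ee τ r μ ν κ * ℓ ν * ℓ κ)
    -- bounds R^μ_ν, P^μ_ν for the seminorms of R(τ), R(τ)⁻¹
    (Rb Pb : ℝ → M → M → ℝ)
    (hRbcont : ∀ μ ν, ContinuousOn (fun τ => Rb τ μ ν) {τ : ℝ | 0 ≤ τ ∧ (τ : EReal) < U})
    (hPbcont : ∀ μ ν, ContinuousOn (fun τ => Pb τ μ ν) {τ : ℝ | 0 ≤ τ ∧ (τ : EReal) < U})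
    (hRbnonneg : ∀ τ : ℝ, 0 ≤ τ → (τ : EReal) < U → ∀ μ ν, 0 ≤ Rb τ μ ν)
    (hPbnonneg : ∀ τ : ℝ, 0 ≤ τ → (τ : EReal) < U → ∀ μ ν, 0 ≤ Pb τ μ ν)
    (hRb : ∀ τ : ℝ, 0 ≤ τ → (τ : EReal) < U → ∀ μ ν, NT μ ν (R τ) ≤ Rb τ μ ν)
    (hPb : ∀ τ : ℝ, 0 ≤ τ → (τ : EReal) < U → ∀ μ ν, NT μ ν ((R τ)⁻¹) ≤ Pb τ μ ν)
    -- the perturbed solution on [0, U/ε)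
    (Ifun : ℝ → Fin d → ℝ) (Θ : ℝ → ℝ)
    (hIinit : Ifun 0 = I₀) (hΘinit : Θ 0 = θ₀)
    (hIode : ∀ t : ℝ, 0 ≤ t → ((ε * t : ℝ) : EReal) < U →
      HasDerivAt Ifun (ε • f (Ifun t) (Θ t)) t)
    (hΘode : ∀ t : ℝ, 0 ≤ t → ((ε * t : ℝ) : EReal) < U →
      HasDerivAt Θ (ω (Ifun t) + ε * g (Ifun t) (Θ t)) t)
    -- the error function and the assumption |L(t)|^μ < ρ^μ(εt)/ε
    (L : ℝ → Fin d → ℝ)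
    (hL : ∀ t, L t = ε⁻¹ • (Ifun t - J (ε * t)))
    (hLlt : ∀ t : ℝ, 0 ≤ t → ((ε * t : ℝ) : EReal) < U → ∀ μ,
      ((ε * N μ (L t) : ℝ) : EReal) < ρ (ε * t) μ) :
    ∀ (μ : M) (t : ℝ), 0 ≤ t → ((ε * t : ℝ) : EReal) < U →
      N μ (L t) ≤ α (ε * t) (fun ν => ε * N ν (L t)) μ
        + ε ^ 2 * ∑ lam, Rb (ε * t) μ lam *
            ∫ t' in (0:ℝ)..t, ∑ κ, Pb (ε * t') lam κ *
              γ (ε * t') (fun ν => ε * N ν (L t')) (fun ν => N ν (L t')) κ := by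
  have hopen : IsOpen (Λ ×ˢ (Set.univ : Set ℝ)) := hΛ.prod isOpen_univ
  have hm1 : (1 : WithTop ℕ∞) ≤ m := by exact_mod_cast (by omega : 1 ≤ m)
  have hF'cont : ContinuousOn F' Λ := ContinuousOn.of_matrix_entries fun i k I hI =>
    (hF'' I hI i k).continuousAt.continuousWithinAt
  have hfbarC : ContDiffOn ℝ 1 fbar Λ := by
    let Φ : Matrix (Fin d) (Fin d) ℝ →ₗ[ℝ] ((Fin d → ℝ) →L[ℝ] (Fin d → ℝ)) :=
      LinearMap.toContinuousLinearMap.toLinearMap ∘ₗ Matrix.toLin'.toLinearMap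
    exact contDiffOn_one_of_hasFDerivAt hΛ hF'
      ((LinearMap.continuous_of_finiteDimensional Φ).comp_continuousOn hF'cont)
  have hfst : Set.MapsTo (Prod.fst : (Fin d → ℝ) × ℝ → Fin d → ℝ) (Λ ×ˢ Set.univ) Λ :=
    fun q hq => hq.1
  have hωC : ContDiffOn ℝ 1 (fun q : (Fin d → ℝ) × ℝ => (ω q.1)⁻¹) (Λ ×ˢ Set.univ) :=
    ((hω.of_le hm1).comp contDiffOn_fst hfst).inv fun q hq => hωne _ hq.1
  have hsθC : ContDiffOn ℝ 1 (fun q : (Fin d → ℝ) × ℝ => sθ q.1 q.2) (Λ ×ˢ Set.univ) := by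
    refine (hωC.smul ((hf.of_le hm1).sub (hfbarC.comp contDiffOn_fst hfst))).congr fun q hq => ?_
    simp [hs q.1 hq.1 q.2, hωne q.1 hq.1]
  have hsC : ContinuousOn (fun q : (Fin d → ℝ) × ℝ => s q.1 q.2) (Λ ×ˢ Set.univ) :=
    continuousOn_uncurry_of_hasFDerivAt hΛ hsI hsθ hsθC.continuousOn
  have hsIC := continuousOn_fderiv_of_integral_eq_zero Real.two_pi_pos hΛ hsθ hsθC hsavg hsI
  have hpC : ContinuousOn (fun q : (Fin d → ℝ) × ℝ => p q.1 q.2) (Λ ×ˢ Set.univ) :=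
    ((hsIC.clm_apply hf.continuousOn).add (hg.continuousOn.smul hsθC.continuousOn)).congr
      fun q hq => by simpa using hp q.1 hq.1 q.2
  have hpbarC : ContinuousOn pbar Λ :=
    ((continuousOn_intervalIntegral_const 0 (2 * π) hpC).const_smul (2 * π)⁻¹).congr hpbar
  have hvθC : ContinuousOn (fun q : (Fin d → ℝ) × ℝ => vθ q.1 q.2) (Λ ×ˢ Set.univ) :=
    (hωC.continuousOn.smul hsC).congr fun q hq => by simp [hv q.1 hq.1 q.2, hωne q.1 hq.1]
  have hwθC : ContinuousOn (fun q : (Fin d → ℝ) × ℝ => wθ q.1 q.2) (Λ ×ˢ Set.univ) :=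
    (hωC.continuousOn.smul (hpC.sub (hpbarC.comp continuousOn_fst hfst))).congr fun q hq => by
      simp [hw q.1 hq.1 q.2, hωne q.1 hq.1]
  intro μ T hT hTU
  have hτ0 : ∀ t ∈ Set.Icc 0 T, 0 ≤ ε * t := fun t ht => mul_nonneg hε.le ht.1
  have hτU : ∀ t ∈ Set.Icc 0 T, ((ε * t : ℝ) : EReal) < U := fun t ht =>
    lt_of_le_of_lt (EReal.coe_le_coe_iff.2 (mul_le_mul_of_nonneg_left ht.2 hε.le)) hTU
  have hIJ : ∀ t, Ifun t = J (ε * t) + ε • L t := fun t => by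
    rw [hL, smul_inv_smul₀ hε.ne']; abel
  have hNδ : ∀ t ν, N ν (ε • L t) = ε * N ν (L t) := fun t ν => by
    rw [map_smul_eq_mul, Real.norm_of_nonneg hε.le]
  have hδlt : ∀ t ∈ Set.Icc 0 T, ∀ ν, ((N ν (ε • L t) : ℝ) : EReal) < ρ (ε * t) ν :=
    fun t ht ν => by rw [hNδ]; exact hLlt t ht.1 (hτU t ht) ν
  have hseg : ∀ t ∈ Set.Icc 0 T, segment ℝ (J (ε * t)) (J (ε * t) + ε • L t) ⊆ Λ := by
    intro t ht y hy
    rw [segment_eq_image'] at hy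
    obtain ⟨x, hx, rfl⟩ := hy
    refine hρB _ (hτ0 t ht) (hτU t ht) _ fun ν => lt_of_le_of_lt ?_ (hδlt t ht ν)
    rw [EReal.coe_le_coe_iff]
    simp only [add_sub_cancel_left, map_smul_eq_mul (N ν) x, Real.norm_of_nonneg hx.1]
    exact mul_le_of_le_one_left (apply_nonneg _ _) hx.2
  have hJΛ : ∀ t ∈ Set.Icc 0 T, J (ε * t) ∈ Λ := fun t ht => hJmem _ (hτ0 t ht) (hτU t ht)
  have hIΛ : ∀ t ∈ Set.Icc 0 T, Ifun t ∈ Λ := fun t ht => by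
    rw [hIJ]; exact hseg t ht (right_mem_segment ℝ _ _)
  have hεt : ∀ t : ℝ, HasDerivAt (fun t => ε * t) ε t := fun t => by
    simpa using (hasDerivAt_id t).const_mul ε
  have hJ' : ∀ t ∈ Set.Icc 0 T,
      HasDerivAt (fun t => J (ε * t)) (ε • fbar (J (ε * t))) t := fun t ht =>
    (hJode _ (hτ0 t ht) (hτU t ht)).scomp t (hεt t)
  have hK' : ∀ t ∈ Set.Icc 0 T, HasDerivAt (fun t => K (ε * t))
      (ε • (F' (J (ε * t)) *ᵥ K (ε * t) + pbar (J (ε * t)))) t := fun t ht =>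
    (hKode _ (hτ0 t ht) (hτU t ht)).scomp t (hεt t)
  have hR' : ∀ t ∈ Set.Icc 0 T, ∀ i j, HasDerivAt (fun t => R (ε * t) i j)
      (((ε • F' (J (ε * t))) * R (ε * t)) i j) t := fun t ht i j => by
    rw [Matrix.smul_mul]
    exact (hRode _ (hτ0 t ht) (hτU t ht) i j).scomp t (hεt t)
  have hI' : ∀ t ∈ Set.Icc 0 T, HasDerivAt Ifun (ε • f (Ifun t) (Θ t)) t := fun t ht =>
    hIode t ht.1 (hτU t ht)
  have hL' : ∀ t ∈ Set.Icc 0 T,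
      HasDerivAt L (f (Ifun t) (Θ t) - fbar (J (ε * t))) t := fun t ht => by
    have := ((hI' t ht).sub (hJ' t ht)).const_smul ε⁻¹
    rw [← smul_sub, inv_smul_smul₀ hε.ne'] at this
    exact this.congr_of_eventuallyEq (.of_forall hL)
  have hFJ' : ∀ t ∈ Set.Icc 0 T, ∀ i k, HasDerivAt (fun t => F' (J (ε * t)) i k)
      ((ε • (𝓜 (J (ε * t)) + F' (J (ε * t)) * F' (J (ε * t)))) i k) t := fun t ht i k => by
    have := (hF'' _ (hJΛ t ht) i k).comp_hasDerivAt t (hJ' t ht)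
    convert! this using 1
    simp [h𝓜 _ (hJΛ t ht), Finset.mul_sum]
  have hcurve : ∀ (φ φθ : (Fin d → ℝ) → ℝ → Fin d → ℝ)
      (φI : (Fin d → ℝ) → ℝ → Matrix (Fin d) (Fin d) ℝ),
      (∀ I ∈ Λ, ∀ θ : ℝ,
        HasFDerivAt (fun I' => φ I' θ) (Matrix.mulVecLin (φI I θ)).toContinuousLinearMap I) →
      (∀ I ∈ Λ, ∀ θ : ℝ, HasDerivAt (φ I) (φθ I θ) θ) →
      ContinuousOn (fun q : (Fin d → ℝ) × ℝ => φθ q.1 q.2) (Λ ×ˢ Set.univ) →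
      ∀ t ∈ Set.Icc 0 T, HasDerivAt (fun t => φ (Ifun t) (Θ t))
        (ε • (φI (Ifun t) (Θ t) *ᵥ f (Ifun t) (Θ t) + g (Ifun t) (Θ t) • φθ (Ifun t) (Θ t))
          + ω (Ifun t) • φθ (Ifun t) (Θ t)) t := by
    intro φ φθ φI hφI hφθ hφθC t ht
    have := hasDerivAt_comp_curve hΛ (hIΛ t ht) (hφI _ (hIΛ t ht) _) hφθ hφθC (hI' t ht)
      (hΘode t ht.1 (hτU t ht))
    convert! this using 1
    simp only [LinearMap.coe_toContinuousLinearMap', Matrix.mulVecLin_apply, Matrix.mulVec_smul]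
    module
  have hs' : ∀ t ∈ Set.Icc 0 T, HasDerivAt (fun t => s (Ifun t) (Θ t))
      (ε • p (Ifun t) (Θ t) + ω (Ifun t) • sθ (Ifun t) (Θ t)) t := fun t ht => by
    rw [hp _ (hIΛ t ht)]; exact hcurve s sθ sI hsI hsθ hsθC.continuousOn t ht
  have hv' : ∀ t ∈ Set.Icc 0 T, HasDerivAt (fun t => v (Ifun t) (Θ t))
      (ε • q (Ifun t) (Θ t) + ω (Ifun t) • vθ (Ifun t) (Θ t)) t := fun t ht => by
    rw [hq _ (hIΛ t ht)]; exact hcurve v vθ vI hvI hvθ hvθC t ht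
  have hw' : ∀ t ∈ Set.Icc 0 T, HasDerivAt (fun t => w (Ifun t) (Θ t))
      (ε • u (Ifun t) (Θ t) + ω (Ifun t) • wθ (Ifun t) (Θ t)) t := fun t ht => by
    rw [hu _ (hIΛ t ht)]; exact hcurve w wθ wI hwI hwθ hwθC t ht
  let quad : ℝ → Fin d → ℝ := fun t i =>
    ∑ j, ∑ k, 𝓗 (J (ε * t)) (ε • L t) i j k * L t j * L t k
  let Ψ : ℝ → Fin d → ℝ := fun t =>
    (u (Ifun t) (Θ t) - F' (J (ε * t)) *ᵥ (w (Ifun t) (Θ t) + q (Ifun t) (Θ t))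
      - 𝓜 (J (ε * t)) *ᵥ v (Ifun t) (Θ t))
      - 𝓖 (J (ε * t)) (ε • L t) *ᵥ L t + (1 / 2 : ℝ) • quad t
  let Y : ℝ → Fin d → ℝ := fun t =>
    L t - s (Ifun t) (Θ t) + R (ε * t) *ᵥ s I₀ θ₀ + K (ε * t)
      + ε • (w (Ifun t) (Θ t) - F' (J (ε * t)) *ᵥ v (Ifun t) (Θ t))
  have hY' : ∀ t ∈ Set.Icc 0 T,
      HasDerivAt Y ((ε • F' (J (ε * t))) *ᵥ Y t + ε ^ 2 • Ψ t) t := by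
    intro t ht
    have hder := ((((hL' t ht).sub (hs' t ht)).add
      (HasDerivAt.matrix_mulVec (hR' t ht) (hasDerivAt_const t (s I₀ θ₀)))).add (hK' t ht)).add
      (((hw' t ht).sub (HasDerivAt.matrix_mulVec (hFJ' t ht) (hv' t ht))).const_smul ε)
    convert! hder using 1
    have hquad : (fun i => ∑ j, ∑ k, 𝓗 (J (ε * t)) (ε • L t) i j k * (ε • L t) j * (ε • L t) k)
        = ε ^ 2 • quad t := by
      ext i
      simp only [quad, Pi.smul_apply, smul_eq_mul, Finset.mul_sum]
      exact Finset.sum_congr rfl fun j _ => Finset.sum_congr rfl fun k _ => by ring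
    have ef := hs _ (hIΛ t ht) (Θ t)
    have efbar := h𝓗 _ _ (hseg t ht)
    have ep := hw _ (hIΛ t ht) (Θ t)
    have epbar := h𝓖 _ _ (hseg t ht)
    rw [← hIJ, Matrix.mulVec_smul] at efbar epbar
    rw [hquad] at efbar
    have ev := hv _ (hIΛ t ht) (Θ t)
    simp only [Y, Ψ, ef, ep, efbar, epbar, ← ev, Matrix.mulVec_add, Matrix.mulVec_sub,
      Matrix.mulVec_smul, Matrix.add_mulVec, Matrix.smul_mulVec, ← Matrix.mulVec_mulVec,
      Matrix.mulVec_zero, Matrix.smul_mul]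
    module
  have hA : ContinuousOn (fun t => ε • F' (J (ε * t))) (Set.Icc 0 T) :=
    (hF'cont.comp (fun t ht => (hJ' t ht).continuousAt.continuousWithinAt) hJΛ).const_smul ε
  have hR0' : R (ε * 0) = 1 := by rw [mul_zero, hR0]
  have hdet : ∀ t ∈ Set.Icc 0 T, (R (ε * t)).det ≠ 0 := fun t ht =>
    det_ne_zero_of_hasDerivAt_mul (R := fun t => R (ε * t)) hA hR0' hR' ht
  have hZ' : ∀ t ∈ Set.Icc 0 T, HasDerivAt (fun t => (R (ε * t))⁻¹ *ᵥ Y t)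
      ((R (ε * t))⁻¹ *ᵥ (ε ^ 2 • Ψ t)) t := fun t ht =>
    hasDerivAt_inv_mulVec (A := fun t => ε • F' (J (ε * t))) (R := fun t => R (ε * t))
      (hdet t ht) (hR' t ht) (hY' t ht)
  have hY0 : Y 0 = 0 := by
    have hL0 : L 0 = 0 := by rw [hL, hIinit, mul_zero, hJ0, sub_self, smul_zero]
    simp [Y, hL0, hIinit, hΘinit, hR0, hK0, hv0 I₀ hI₀, hw0 I₀ hI₀]
  have hΨ : ∀ t ∈ Set.Icc 0 T, ∀ κ, N κ (Ψ t) ≤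
      γ (ε * t) (fun ν => ε * N ν (L t)) (fun ν => N ν (L t)) κ := by
    intro t ht κ
    have h0 := hτ0 t ht
    have h1 := hτU t ht
    have h2 := hδlt t ht
    have hc' := hc _ h0 h1 _ h2 (Θ t) κ
    have hd' := hdbound _ h0 h1 _ h2 κ
    have he' := hebound _ h0 h1 _ h2 κ
    simp only [hNδ, ← hIJ] at hc' hd' he'
    rw [hγ]
    refine (map_add_le_add _ _ _).trans (add_le_add ((map_sub_le_add _ _ _).trans
      (add_le_add hc' ((hNT _ _ _).trans (Finset.sum_le_sum fun ν _ => ?_)))) ?_)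
    · exact mul_le_mul_of_nonneg_right (hd' ν) (apply_nonneg _ _)
    · rw [map_smul_eq_mul, Real.norm_of_nonneg (by norm_num : (0 : ℝ) ≤ 1 / 2)]
      refine mul_le_mul_of_nonneg_left ((hNT2 _ _ _ _).trans (Finset.sum_le_sum fun ν _ =>
        Finset.sum_le_sum fun κ' _ => ?_)) (by norm_num)
      exact mul_le_mul_of_nonneg_right (mul_le_mul_of_nonneg_right (he' ν κ')
        (apply_nonneg _ _)) (apply_nonneg _ _)
  let β : M → ℝ → ℝ := fun lam t => ∑ κ, Pb (ε * t) lam κ *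
    γ (ε * t) (fun ν => ε * N ν (L t)) (fun ν => N ν (L t)) κ
  have hNL : ∀ ν, ContinuousOn (fun t => N ν (L t)) (Set.Icc 0 T) := fun ν =>
    (continuousOn_univ.1 ((N ν).convexOn.continuousOn isOpen_univ)).comp_continuousOn
      fun t ht => (hL' t ht).continuousAt.continuousWithinAt
  have hβ : ∀ lam, ContinuousOn (β lam) (Set.Icc 0 T) := by
    intro lam
    have hpath : ContinuousOn (fun t => (ε * t, fun ν => ε * N ν (L t))) (Set.Icc 0 T) :=
      (by fun_prop : Continuous fun t : ℝ => ε * t).continuousOn.prodMk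
        (continuousOn_pi.2 fun ν => continuousOn_const.mul (hNL ν))
    have hmaps : Set.MapsTo (fun t => (ε * t, fun ν => ε * N ν (L t))) (Set.Icc 0 T) Γ := by
      intro t ht
      rw [hΓ]
      exact ⟨hτ0 t ht, hτU t ht, fun ν =>
        ⟨mul_nonneg hε.le (apply_nonneg _ _), hLlt t ht.1 (hτU t ht) ν⟩⟩
    refine continuousOn_finsetSum _ fun κ _ => ContinuousOn.mul ?_ ?_
    · exact (hPbcont lam κ).comp (by fun_prop : Continuous fun t : ℝ => ε * t).continuousOn
        fun t ht => ⟨hτ0 t ht, hτU t ht⟩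
    · simp only [hγ]
      refine ((hccont κ).comp hpath hmaps).add (continuousOn_finsetSum _ fun ν _ =>
        ((hdcont κ ν).comp hpath hmaps).mul (hNL ν)) |>.add (continuousOn_const.mul
        (continuousOn_finsetSum _ fun ν _ => continuousOn_finsetSum _ fun κ' _ =>
          (((hecont κ ν κ').comp hpath hmaps).mul (hNL ν)).mul (hNL κ')))
  have hNZ : ∀ lam, N lam ((R (ε * T))⁻¹ *ᵥ Y T) ≤ ε ^ 2 * ∫ t in (0 : ℝ)..T, β lam t := by
    intro lam
    rw [← intervalIntegral.integral_const_mul]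
    refine (N lam).le_integral_of_hasDerivAt hT (by simp [hY0]) hZ'
      (continuousOn_const.mul (hβ lam)) fun t ht => ?_
    rw [Matrix.mulVec_smul, map_smul_eq_mul, Real.norm_of_nonneg (by positivity)]
    refine mul_le_mul_of_nonneg_left ((hNT _ _ _).trans (Finset.sum_le_sum fun κ _ => ?_))
      (by positivity)
    exact mul_le_mul (hPb _ (hτ0 t ht) (hτU t ht) lam κ) (hΨ t ht κ) (apply_nonneg _ _)
      (hPbnonneg _ (hτ0 t ht) (hτU t ht) lam κ)
  have hTmem : T ∈ Set.Icc 0 T := ⟨hT, le_rfl⟩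
  have h0 := hτ0 T hTmem
  have hNY : N μ (Y T) ≤ ε ^ 2 * ∑ lam, Rb (ε * T) μ lam * ∫ t in (0 : ℝ)..T, β lam t := by
    have hRZ : Y T = R (ε * T) *ᵥ ((R (ε * T))⁻¹ *ᵥ Y T) := by
      rw [Matrix.mulVec_mulVec, Matrix.mul_nonsing_inv _ (isUnit_iff_ne_zero.2 (hdet T hTmem)),
        Matrix.one_mulVec]
    rw [hRZ, Finset.mul_sum]
    refine (hNT _ _ _).trans (Finset.sum_le_sum fun lam _ => ?_)
    rw [mul_left_comm]
    exact mul_le_mul (hRb _ h0 hTU μ lam) (hNZ lam) (apply_nonneg _ _) (hRbnonneg _ h0 hTU μ lam)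
  have ha' := ha _ h0 hTU _ (hδlt T hTmem) (Θ T) μ
  have hb' := hb _ h0 hTU _ (hδlt T hTmem) (Θ T) μ
  simp only [hNδ, ← hIJ] at ha' hb'
  have hdecomp : L T = (s (Ifun T) (Θ T) - R (ε * T) *ᵥ s I₀ θ₀ - K (ε * T)
      - ε • (w (Ifun T) (Θ T) - F' (J (ε * T)) *ᵥ v (Ifun T) (Θ T))) + Y T := by
    simp only [Y]; abel
  rw [hα]
  calc N μ (L T) ≤ N μ _ + N μ (Y T) := by
        conv_lhs => rw [hdecomp]
        exact map_add_le_add _ _ _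
    _ ≤ _ := add_le_add ((map_sub_le_add _ _ _).trans (add_le_add ha' ?_)) hNY
  rw [map_smul_eq_mul, Real.norm_of_nonneg hε.le]
  exact mul_le_mul_of_nonneg_left hb' hε.le
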